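/- The identity (8/π²) · ∫₀^{π/2} ∫₀^{π/2} ∫₀^{π/2} sin φ · sin⁴ψ dψ dφ dθ + (24/π²) · ∫₀^{π/2} ∫₀^{π/2} ∫₀^{π/2} √(1 − cos²φ · sin²ψ) · sin ψ · sin φ · sin²ψ dψ dφ dθ = 3·(1/4 + π/8 + 1/π) holds. (This is the second moment E(mw²) of the mean width of the projection of a unit 4-cube onto a uniformly random 3-subspace of ℝ⁴.) -/

import Mathlib

open Real

/-!
By Fubini it suffices to integrate over `φ` first in the second integral. There the substitution
`u = cos φ * sin ψ` turns `sin ψ * sin φ dφ` into `-du`, so the `φ`-integral is the area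
`F ψ = (ψ + sin ψ * cos ψ) / 2` of the part of the unit disc above the segment `[0, sin ψ]`.
Since `F' = cos ^ 2`, the remaining integral of `sin ^ 2 * F = F - F * F'` is elementary.
-/

theorem intervalIntegral_swap_of_continuous {E : Type*} [NormedAddCommGroup E] [NormedSpace ℝ E]
    {F : ℝ → ℝ → E} (hF : Continuous F.uncurry) (a b c d : ℝ) :
    ∫ x in a..b, ∫ y in c..d, F x y = ∫ y in c..d, ∫ x in a..b, F x y :=
  MeasureTheory.intervalIntegral_intervalIntegral_swap <|
    (hF.continuousOn.integrableOn_compact (isCompact_uIcc.prod isCompact_uIcc)).mono_set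
      (Set.prod_mono Set.uIoc_subset_uIcc Set.uIoc_subset_uIcc)

theorem intervalIntegral_self_mul_deriv {a b : ℝ} {f f' : ℝ → ℝ}
    (hf : ∀ x ∈ Set.uIcc a b, HasDerivAt f (f' x) x) (hf' : ContinuousOn f' (Set.uIcc a b)) :
    ∫ x in a..b, f x * f' x = (f b ^ 2 - f a ^ 2) / 2 :=
  (intervalIntegral.integral_comp_mul_deriv hf hf' continuous_id).trans integral_id

theorem integral_comp_cos_mul_const {f : ℝ → ℝ} (hf : Continuous f) (a b s : ℝ) :
    ∫ x in a..b, f (cos x * s) * (s * sin x) = ∫ u in (cos b * s)..(cos a * s), f u := by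
  have hderiv (x : ℝ) : HasDerivAt (fun x ↦ cos x * s) (-(s * sin x)) x :=
    ((hasDerivAt_cos x).mul_const s).congr_deriv (by ring)
  rw [intervalIntegral.integral_symm, ← intervalIntegral.integral_comp_mul_deriv
    (fun x _ ↦ hderiv x) (by fun_prop) hf, ← intervalIntegral.integral_neg]
  simp only [Function.comp_apply, mul_neg]

theorem integral_integral_comp_cos_mul {f s w : ℝ → ℝ} (hf : Continuous f) (hs : Continuous s)
    (hw : Continuous w) (a b c d : ℝ) :
    ∫ x in a..b, ∫ y in c..d, f (cos x * s y) * (s y * sin x) * w y =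
      ∫ y in c..d, (∫ u in (cos b * s y)..(cos a * s y), f u) * w y := by
  rw [intervalIntegral_swap_of_continuous (by fun_prop)]
  simp only [intervalIntegral.integral_mul_const, integral_comp_cos_mul_const hf]

theorem integral_sqrt_one_sub_sq_sin {a b : ℝ} (ha : a ∈ Set.Icc (-(π / 2)) (π / 2))
    (hb : b ∈ Set.Icc (-(π / 2)) (π / 2)) :
    ∫ u in (sin a)..(sin b), √(1 - u ^ 2) = (b + sin b * cos b - (a + sin a * cos a)) / 2 := by
  calc ∫ u in (sin a)..(sin b), √(1 - u ^ 2)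
      = ∫ x in a..b, √(1 - sin x ^ 2) * cos x :=
        (intervalIntegral.integral_comp_mul_deriv (fun x _ ↦ hasDerivAt_sin x)
          continuousOn_cos (by fun_prop : Continuous fun u ↦ √(1 - u ^ 2))).symm
    _ = ∫ x in a..b, cos x ^ 2 := by
        refine intervalIntegral.integral_congr fun x hx ↦ ?_
        have hcos : 0 ≤ cos x := cos_nonneg_of_mem_Icc (Set.uIcc_subset_Icc ha hb hx)
        simp only [← cos_sq', sqrt_sq hcos, ← sq]
    _ = (b + sin b * cos b - (a + sin a * cos a)) / 2 := by
        rw [integral_cos_sq]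
        ring

theorem hasDerivAt_add_sin_mul_cos (x : ℝ) :
    HasDerivAt (fun x ↦ x + sin x * cos x) (2 * cos x ^ 2) x := by
  refine ((hasDerivAt_id x).add ((hasDerivAt_sin x).mul (hasDerivAt_cos x))).congr_deriv ?_
  linear_combination -sin_sq x

theorem integral_add_sin_mul_cos_mul_sin_sq (a b : ℝ) :
    ∫ x in a..b, (x + sin x * cos x) * sin x ^ 2 =
      (b ^ 2 - a ^ 2) / 2 + (sin b ^ 2 - sin a ^ 2) / 2 -
        ((b + sin b * cos b) ^ 2 - (a + sin a * cos a) ^ 2) / 4 := by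
  have integrable {f : ℝ → ℝ} (hf : Continuous f) :
      IntervalIntegrable f MeasureTheory.volume a b := hf.intervalIntegrable a b
  calc ∫ x in a..b, (x + sin x * cos x) * sin x ^ 2
      = ∫ x in a..b, (x + sin x * cos x -
          (x + sin x * cos x) * (2 * cos x ^ 2) / 2) := by
        simp only [sin_sq]
        ring_nf
    _ = (∫ x in a..b, x) + (∫ x in a..b, sin x * cos x) -
          (∫ x in a..b, (x + sin x * cos x) * (2 * cos x ^ 2)) / 2 := by
        rw [intervalIntegral.integral_sub (integrable (by fun_prop)) (integrable (by fun_prop)),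
          intervalIntegral.integral_add (integrable (by fun_prop)) (integrable (by fun_prop)),
          intervalIntegral.integral_div]
    _ = _ := by
        rw [integral_id, integral_sin_mul_cos₁, intervalIntegral_self_mul_deriv
          (fun x _ ↦ hasDerivAt_add_sin_mul_cos x) (by fun_prop)]
        ring

theorem integral_sin_pow_zero_pi_div_two (n : ℕ) :
    ∫ x in (0 : ℝ)..(π / 2), sin x ^ n = 1 / 2 * ∫ x in (0 : ℝ)..π, sin x ^ n := by
  rw [← EulerSine.integral_cos_pow_eq]
  simpa only [sin_pi_div_two_sub, sub_zero, sub_self] using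
    (intervalIntegral.integral_comp_sub_left (fun x ↦ sin x ^ n) (π / 2)
      (a := 0) (b := π / 2)).symm

theorem integral_integral_sin_mul_sin_pow_four :
    ∫ φ in (0 : ℝ)..(π / 2), ∫ ψ in (0 : ℝ)..(π / 2), sin φ * sin ψ ^ 4 = 3 * π / 16 := by
  have sin_pow_four : ∫ ψ in (0 : ℝ)..(π / 2), sin ψ ^ 4 = 3 * π / 16 := by
    rw [integral_sin_pow_zero_pi_div_two, integral_sin_pow_even 2]
    norm_num [Finset.prod_range_succ]
    ring
  simp only [intervalIntegral.integral_const_mul, intervalIntegral.integral_mul_const,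
    sin_pow_four, integral_sin, cos_zero, cos_pi_div_two, sub_zero, one_mul]

theorem integral_integral_sqrt_one_sub_cos_sq_mul_sin_sq :
    ∫ φ in (0 : ℝ)..(π / 2), ∫ ψ in (0 : ℝ)..(π / 2),
      √(1 - cos φ ^ 2 * sin ψ ^ 2) * sin ψ * sin φ * sin ψ ^ 2 = π ^ 2 / 32 + 1 / 4 := by
  have disc_area {ψ : ℝ} (hψ : ψ ∈ Set.uIcc 0 (π / 2)) :
      ∫ u in (0 : ℝ)..(sin ψ), √(1 - u ^ 2) = (ψ + sin ψ * cos ψ) / 2 := by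
    rw [Set.uIcc_of_le pi_div_two_pos.le] at hψ
    simpa only [sin_zero, zero_mul, add_zero, sub_zero] using
      integral_sqrt_one_sub_sq_sin (a := 0) ⟨by linarith [pi_pos], by positivity⟩
        ⟨by linarith [pi_pos, hψ.1], hψ.2⟩
  calc ∫ φ in (0 : ℝ)..(π / 2), ∫ ψ in (0 : ℝ)..(π / 2),
        √(1 - cos φ ^ 2 * sin ψ ^ 2) * sin ψ * sin φ * sin ψ ^ 2
      = ∫ ψ in (0 : ℝ)..(π / 2), (∫ u in (0 : ℝ)..(sin ψ), √(1 - u ^ 2)) * sin ψ ^ 2 := by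
        simpa only [← mul_pow, ← mul_assoc, cos_zero, cos_pi_div_two, zero_mul, one_mul] using
          integral_integral_comp_cos_mul (f := fun u ↦ √(1 - u ^ 2)) (w := fun ψ ↦ sin ψ ^ 2)
            (by fun_prop) continuous_sin (by fun_prop) 0 (π / 2) 0 (π / 2)
    _ = ∫ ψ in (0 : ℝ)..(π / 2), (ψ + sin ψ * cos ψ) * sin ψ ^ 2 / 2 :=
        intervalIntegral.integral_congr fun ψ hψ ↦ by
          simp only [disc_area hψ, div_mul_eq_mul_div]
    _ = π ^ 2 / 32 + 1 / 4 := by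
        rw [intervalIntegral.integral_div, integral_add_sin_mul_cos_mul_sin_sq]
        simp only [sin_zero, cos_zero, sin_pi_div_two, cos_pi_div_two]
        ring

/-- The second moment `E(mw²)` of the mean width of the projection of a unit 4-cube
onto a uniformly random 3-subspace of `ℝ⁴` equals `3(1/4 + π/8 + 1/π)`. -/
theorem second_moment_mean_width_projection_4cube :
    (8 / π ^ 2) *
      (∫ _θ in (0:ℝ)..(π/2), ∫ φ in (0:ℝ)..(π/2), ∫ ψ in (0:ℝ)..(π/2),
        Real.sin φ * Real.sin ψ ^ 4)
    + (24 / π ^ 2) *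
      (∫ _θ in (0:ℝ)..(π/2), ∫ φ in (0:ℝ)..(π/2), ∫ ψ in (0:ℝ)..(π/2),
        Real.sqrt (1 - Real.cos φ ^ 2 * Real.sin ψ ^ 2) * Real.sin ψ *
          Real.sin φ * Real.sin ψ ^ 2)
    = 3 * (1/4 + π/8 + 1/π) := by
  rw [integral_integral_sin_mul_sin_pow_four, integral_integral_sqrt_one_sub_cos_sq_mul_sin_sq]
  simp only [intervalIntegral.integral_const, smul_eq_mul, sub_zero]
  field_simp
  ring
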